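/- arXiv:math/0601377 — 2 statements merged into one kernel-verified Lean document; each statement's English description precedes it below -/
import Mathlib

section
/- Let A be a Noetherian integral domain. Then A is a Dedekind domain if and only if (𝔞 ∩ 𝔟)(𝔞 + 𝔟) = 𝔞𝔟 holds for every pair of ideals 𝔞, 𝔟 of A. -/
/-- If `(I ⊓ J) * (I + J) = I * J` and both `I` and `J` divide nonzero principal ideals,
then so does `I + J`. -/
theorem Ideal.exists_add_mul_eq_span_singleton {A : Type*} [CommRing A] [IsDomain A]
    {I J : Ideal A} (h : (I ⊓ J) * (I + J) = I * J)
    (hI : ∃ I' : Ideal A, ∃ c : A, c ≠ 0 ∧ I * I' = Ideal.span {c})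
    (hJ : ∃ J' : Ideal A, ∃ c : A, c ≠ 0 ∧ J * J' = Ideal.span {c}) :
    ∃ K : Ideal A, ∃ c : A, c ≠ 0 ∧ (I + J) * K = Ideal.span {c} := by
  obtain ⟨I', c, hc, hI⟩ := hI
  obtain ⟨J', d, hd, hJ⟩ := hJ
  refine ⟨(I ⊓ J) * (I' * J'), c * d, mul_ne_zero hc hd, ?_⟩
  rw [← Ideal.span_singleton_mul_span_singleton, ← hI, ← hJ, ← mul_assoc, mul_comm (I + J), h]
  ring

/-- If `(I ⊓ J) * (I + J) = I * J` for all ideals, then every nonzero finitely generated ideal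
divides a nonzero principal ideal. -/
theorem Ideal.FG.exists_mul_eq_span_singleton {A : Type*} [CommRing A] [IsDomain A]
    (h : ∀ I J : Ideal A, (I ⊓ J) * (I + J) = I * J) {I : Ideal A} (hfg : I.FG) (hI : I ≠ ⊥) :
    ∃ J : Ideal A, ∃ c : A, c ≠ 0 ∧ I * J = Ideal.span {c} := by
  induction I, hfg using Submodule.fg_induction with
  | singleton x =>
    refine ⟨⊤, x, ?_, Ideal.mul_top _⟩
    rintro rfl
    simp at hI
  | sup I J _ _ ihI ihJ =>
    obtain rfl | hI' := eq_or_ne I ⊥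
    · simp only [bot_sup_eq] at hI ⊢
      exact ihJ hI
    obtain rfl | hJ' := eq_or_ne J ⊥
    · simp only [sup_bot_eq] at hI ⊢
      exact ihI hI
    exact Ideal.exists_add_mul_eq_span_singleton (h I J) (ihI hI') (ihJ hJ')

open scoped nonZeroDivisors in
/-- A domain in which every nonzero ideal divides a nonzero principal ideal is Dedekind. -/
theorem IsDedekindDomain.of_exists_mul_eq_span_singleton {A : Type*} [CommRing A] [IsDomain A]
    (h : ∀ I : Ideal A, I ≠ ⊥ → ∃ J : Ideal A, ∃ c : A, c ≠ 0 ∧ I * J = Ideal.span {c}) :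
    IsDedekindDomain A := by
  refine (isDedekindDomain_iff_mul_inv_cancel (K := FractionRing A)).2 fun I hI => ?_
  rw [FractionalIdeal.mul_inv_cancel_iff_isUnit]
  obtain ⟨a, I₀, ha, rfl⟩ := FractionalIdeal.exists_eq_spanSingleton_mul I
  have hI₀ : I₀ ≠ ⊥ := by
    rintro rfl
    simp at hI
  obtain ⟨J, c, hc, hJ⟩ := h I₀ hI₀
  have isUnit_spanSingleton {x : FractionRing A} (hx : x ≠ 0) :
      IsUnit (FractionalIdeal.spanSingleton A⁰ x) :=
    (FractionalIdeal.mul_inv_cancel_iff_isUnit _).1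
      (FractionalIdeal.spanSingleton_mul_inv _ hx)
  refine (isUnit_spanSingleton ?_).mul (isUnit_of_mul_isUnit_left
    (y := (J : FractionalIdeal A⁰ (FractionRing A))) ?_)
  · simpa using ha
  · rw [← FractionalIdeal.coeIdeal_mul, hJ, FractionalIdeal.coeIdeal_span_singleton]
    exact isUnit_spanSingleton (by simpa using hc)

theorem statement7 {A : Type*} [CommRing A] [IsDomain A] [IsNoetherianRing A] :
    IsDedekindDomain A ↔ ∀ a b : Ideal A, (a ⊓ b) * (a + b) = a * b := by
  refine ⟨fun _ a b => ?_, fun h => ?_⟩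
  · rw [mul_comm, Ideal.add_eq_sup, Ideal.sup_mul_inf]
  · exact .of_exists_mul_eq_span_singleton fun I hI =>
      Ideal.FG.exists_mul_eq_span_singleton h (IsNoetherian.noetherian I) hI
end

section
/- Let A be a Noetherian integral domain such that (𝔞 ∩ 𝔟)(𝔞 + 𝔟) = 𝔞𝔟 for every pair of ideals 𝔞, 𝔟 of A. Then every nonzero proper ideal of A is a product of finitely many prime ideals of A. -/
/-- If `a` and `b` each divide a nonzero principal ideal and `(a ⊓ b) * (a + b) = a * b`, then
`a ⊔ b` divides a nonzero principal ideal. -/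
lemma Ideal.exists_mul_sup_eq_span_singleton {A : Type*} [CommRing A] [IsDomain A]
    {a b : Ideal A} (h : (a ⊓ b) * (a + b) = a * b)
    (ha : ∃ (J : Ideal A) (x : A), x ≠ 0 ∧ a * J = Ideal.span {x})
    (hb : ∃ (J : Ideal A) (x : A), x ≠ 0 ∧ b * J = Ideal.span {x}) :
    ∃ (J : Ideal A) (x : A), x ≠ 0 ∧ (a ⊔ b) * J = Ideal.span {x} := by
  obtain ⟨J, x, hx, hJ⟩ := ha
  obtain ⟨K, y, hy, hK⟩ := hb
  refine ⟨(a ⊓ b) * (J * K), x * y, mul_ne_zero hx hy, ?_⟩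
  calc (a ⊔ b) * ((a ⊓ b) * (J * K)) = ((a ⊓ b) * (a + b)) * (J * K) := by
        rw [Submodule.add_eq_sup]; ring
    _ = (a * J) * (b * K) := by rw [h]; ring
    _ = Ideal.span {x * y} := by rw [hJ, hK, Ideal.span_singleton_mul_span_singleton]

lemma Ideal.exists_mul_eq_span_singleton_of_inf_mul_add {A : Type*} [CommRing A] [IsDomain A]
    (h : ∀ a b : Ideal A, (a ⊓ b) * (a + b) = a * b) {I : Ideal A} (hI : I.FG) (hI0 : I ≠ ⊥) :
    ∃ (J : Ideal A) (x : A), x ≠ 0 ∧ I * J = Ideal.span {x} := by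
  induction I, hI using Submodule.fg_induction with
  | singleton x =>
    refine ⟨⊤, x, fun hx => hI0 (by simp [hx]), ?_⟩
    rw [Ideal.mul_top]
  | sup a b _ _ iha ihb =>
    rcases eq_or_ne a ⊥ with rfl | ha
    · rw [bot_sup_eq] at hI0 ⊢
      exact ihb hI0
    rcases eq_or_ne b ⊥ with rfl | hb
    · rw [sup_bot_eq] at hI0 ⊢
      exact iha hI0
    exact Ideal.exists_mul_sup_eq_span_singleton (h a b) (iha ha) (ihb hb)

open scoped nonZeroDivisors in
lemma isDedekindDomain_of_exists_mul_eq_span_singleton {A : Type*} [CommRing A] [IsDomain A]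
    (h : ∀ I : Ideal A, I ≠ ⊥ → ∃ (J : Ideal A) (x : A), x ≠ 0 ∧ I * J = Ideal.span {x}) :
    IsDedekindDomain A := by
  refine (isDedekindDomain_iff_mul_inv_cancel (K := FractionRing A)).mpr fun I hI => ?_
  obtain ⟨d, a, hd, rfl⟩ := FractionalIdeal.exists_eq_spanSingleton_mul I
  have ha : a ≠ ⊥ := by
    rintro rfl
    simp at hI
  obtain ⟨J, x, hx, hJ⟩ := h a ha
  have hd' : algebraMap A (FractionRing A) d ≠ 0 := by simpa using hd
  have hx' : algebraMap A (FractionRing A) x ≠ 0 := by simpa using hx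
  rw [FractionalIdeal.mul_inv_cancel_iff]
  refine ⟨FractionalIdeal.spanSingleton A⁰
    (algebraMap A (FractionRing A) d * (algebraMap A (FractionRing A) x)⁻¹) * J, ?_⟩
  rw [mul_mul_mul_comm, FractionalIdeal.spanSingleton_mul_spanSingleton,
    ← FractionalIdeal.coeIdeal_mul, hJ, FractionalIdeal.coeIdeal_span_singleton,
    FractionalIdeal.spanSingleton_mul_spanSingleton, ← FractionalIdeal.spanSingleton_one]
  congr 1
  field_simp

theorem statement8 {A : Type*} [CommRing A] [IsDomain A] [IsNoetherianRing A]
    (h : ∀ a b : Ideal A, (a ⊓ b) * (a + b) = a * b) :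
    ∀ I : Ideal A, I ≠ ⊥ → I ≠ ⊤ →
      ∃ (m : ℕ) (p : Fin m → Ideal A), 1 ≤ m ∧ (∀ i, (p i).IsPrime) ∧ I = ∏ i, p i := by
  intro I hI hI'
  have : IsDedekindDomain A :=
    isDedekindDomain_of_exists_mul_eq_span_singleton fun J hJ =>
      Ideal.exists_mul_eq_span_singleton_of_inf_mul_add h
        (IsNoetherian.noetherian J) hJ
  obtain ⟨s, hs, hprod⟩ := UniqueFactorizationMonoid.exists_prime_factors I hI
  rw [associated_iff_eq] at hprod
  have hlist : s.toList.prod = I := by rw [Multiset.prod_toList, hprod]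
  refine ⟨s.toList.length, s.toList.get, ?_, fun i => ?_, ?_⟩
  · rw [Nat.one_le_iff_ne_zero]
    intro h0
    rw [List.length_eq_zero_iff.mp h0, List.prod_nil, Ideal.one_eq_top] at hlist
    exact hI' hlist.symm
  · exact Ideal.isPrime_of_prime (hs _ (Multiset.mem_toList.mp (List.get_mem _ i)))
  · rw [← List.prod_ofFn, List.ofFn_get, hlist]
end
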